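/- For every t with 0 < t < 1 and every r > 0, the compact set S_t ∩ B̄(0;r) is not polynomially convex; in particular S_t is not locally polynomially convex at the origin. -/

import Mathlib

open Complex ComplexConjugate

/-- The polynomially convex hull of a set `K ⊆ ℂ²`. -/
def polyHull2 (K : Set (ℂ × ℂ)) : Set (ℂ × ℂ) :=
  { z | ∀ p : MvPolynomial (Fin 2) ℂ,
      ‖MvPolynomial.eval (fun i => if i = 0 then z.1 else z.2) p‖ ≤
        sSup ((fun w : ℂ × ℂ =>
          ‖MvPolynomial.eval (fun i => if i = 0 then w.1 else w.2) p‖) '' K) }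

/-- A set `K ⊆ ℂ²` is polynomially convex if it equals its polynomially convex hull. -/
def PolyConvex2 (K : Set (ℂ × ℂ)) : Prop := polyHull2 K = K

/-- The closed Euclidean ball of radius `r` centred at the origin in `ℂ²`. -/
def eClosedBall (r : ℝ) : Set (ℂ × ℂ) := { z | ‖z.1‖ ^ 2 + ‖z.2‖ ^ 2 ≤ r ^ 2 }

/-- The open Euclidean ball of radius `r` centred at the origin in `ℂ²`. -/
def eOpenBall (r : ℝ) : Set (ℂ × ℂ) := { z | ‖z.1‖ ^ 2 + ‖z.2‖ ^ 2 < r ^ 2 }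

/-- The surface `S_t = {(z, z²z̄ + t z z̄² + (t²/3) z̄³) : z ∈ ℂ}`. -/
def Sset (t : ℝ) : Set (ℂ × ℂ) :=
  { zw | ∃ z : ℂ, zw = (z, z ^ 2 * conj z + (t : ℂ) * z * (conj z) ^ 2
      + ((t : ℂ) ^ 2 / 3) * (conj z) ^ 3) }

/-!
In the coordinates `(z, w' = z³ + 3 t w)` the surface `S_t` becomes `w' = (z + t z̄)³`. It suffices
to attach to it one bounded analytic disc `Φ = (Z, W)`, parametrised by the right half plane,
with `Z(1) ≠ 0` and `W(1) = 0`: by Phragmén–Lindelöf the disc lies in the hull of its boundary, the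
quasi-homogeneity `(z, w) ↦ (δ z, δ³ w)` of `S_t` shrinks the disc into any ball around `0`, and
`|t| ≠ 1` forces `z = 0` at the points of `S_t` with `w' = 0`, so `Φ(1)` is not on the surface.

Writing `W = (1 - v²) G³` extracts the cube root and makes the boundary condition linear:
`Z + t Z̄ = (1 - v²)^(1/3) G` on `re v = 0`, where conjugation becomes `v ↦ -v`. This is a
connection formula for the Gegenbauer equation. With `J_β(v) = ∫ e^(μ u) (cosh u + v)^(-β) du`,
the functions `J_β(v)`, `J_β(-v)` and `(1 - v²)^(1/2 - β) J_{1-β}(v)` solve the same second order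
equation, hence are linearly dependent; comparing values and derivatives at `0`, which the
reflection formula for `Γ` evaluates, the dependence is the required one when
`t cos(π μ) = cos(π β)`, with `β = 1/6`.
Such a `μ` with `|re μ| < β` exists precisely because `t < 1`.
-/

section CoshIntegral

open MeasureTheory

variable {β δ : ℝ} {μ v : ℂ}

/-- The integrand of `coshIntegral`. -/
noncomputable def coshKernel (β : ℝ) (μ v : ℂ) (u : ℝ) : ℂ :=
  exp (μ * u) * (Real.cosh u + v) ^ (-β : ℂ)

/-- The function `v ↦ ∫ e ^ (μ u) (cosh u + v) ^ (-β) du`, holomorphic on `-1 < re v` as soon as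
`|re μ| < β`: an Euler-type integral representing a Gegenbauer (hypergeometric) function. -/
noncomputable def coshIntegral (β : ℝ) (μ v : ℂ) : ℂ :=
  ∫ u : ℝ, coshKernel β μ v u

lemma integrable_exp_neg_mul_abs {c : ℝ} (hc : 0 < c) :
    Integrable fun u : ℝ ↦ Real.exp (-(c * |u|)) := by
  rw [← integrableOn_univ, ← Set.Iic_union_Ioi (a := (0 : ℝ))]
  refine ((integrableOn_exp_mul_Iic hc 0).congr_fun (fun u hu ↦ ?_) measurableSet_Iic).union
    ((integrableOn_exp_mul_Ioi (neg_lt_zero.2 hc) 0).congr_fun (fun u hu ↦ ?_) measurableSet_Ioi)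
  · simp [abs_of_nonpos (Set.mem_Iic.1 hu)]
  · simp [abs_of_pos (Set.mem_Ioi.1 hu)]

lemma half_exp_abs_le_cosh (u : ℝ) : Real.exp |u| / 2 ≤ Real.cosh u := by
  rw [Real.cosh_eq]
  gcongr
  exact Real.exp_abs_le u

lemma mul_exp_abs_le_re_cosh_add (hδ₀ : 0 ≤ δ) (hδ₁ : δ ≤ 1) (hv : δ - 1 ≤ v.re) (u : ℝ) :
    δ / 2 * Real.exp |u| ≤ (Real.cosh u + v).re := by
  rw [add_re, ofReal_re]
  calc δ / 2 * Real.exp |u| = δ * (Real.exp |u| / 2) := by ring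
    _ ≤ δ * Real.cosh u := by gcongr; exact half_exp_abs_le_cosh u
    _ ≤ Real.cosh u + v.re := by
      nlinarith [mul_nonneg (sub_nonneg.2 hδ₁) (sub_nonneg.2 (Real.one_le_cosh u))]

lemma cosh_add_mem_slitPlane (hv : -1 < v.re) (u : ℝ) : (Real.cosh u + v : ℂ) ∈ slitPlane := by
  left
  rw [add_re, ofReal_re]
  linarith [Real.one_le_cosh u]

lemma norm_coshKernel (β : ℝ) (μ v : ℂ) (u : ℝ) :
    ‖coshKernel β μ v u‖ = Real.exp (μ.re * u) * ‖(Real.cosh u + v : ℂ)‖ ^ (-β) := by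
  rw [coshKernel, norm_mul, norm_exp, ← ofReal_neg, norm_cpow_real, re_mul_ofReal]

lemma norm_coshKernel_le (hβ : 0 ≤ β) (hδ₀ : 0 < δ) (hδ₁ : δ ≤ 1) (hv : δ - 1 ≤ v.re) (u : ℝ) :
    ‖coshKernel β μ v u‖ ≤ (δ / 2) ^ (-β) * Real.exp (-((β - |μ.re|) * |u|)) := by
  have h_exp : Real.exp (μ.re * u) ≤ Real.exp (|μ.re| * |u|) := by
    rw [← abs_mul]
    exact Real.exp_le_exp.2 (le_abs_self _)
  have h_base : δ / 2 * Real.exp |u| ≤ ‖(Real.cosh u + v : ℂ)‖ :=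
    (mul_exp_abs_le_re_cosh_add hδ₀.le hδ₁ hv u).trans (re_le_norm _)
  calc ‖coshKernel β μ v u‖
      ≤ Real.exp (|μ.re| * |u|) * (δ / 2 * Real.exp |u|) ^ (-β) := by
        rw [norm_coshKernel]
        exact mul_le_mul h_exp
          (Real.rpow_le_rpow_of_nonpos (by positivity) h_base (neg_nonpos.2 hβ))
          (by positivity) (by positivity)
    _ = (δ / 2) ^ (-β) * Real.exp (-((β - |μ.re|) * |u|)) := by
        rw [Real.mul_rpow (by positivity) (by positivity), ← Real.exp_mul, mul_left_comm,
          ← Real.exp_add]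
        ring_nf

lemma continuous_coshKernel (β : ℝ) (μ : ℂ) (hv : -1 < v.re) :
    Continuous (coshKernel β μ v) := by
  unfold coshKernel
  have h_base : Continuous fun u : ℝ ↦ (Real.cosh u + v : ℂ) :=
    (continuous_ofReal.comp Real.continuous_cosh).add continuous_const
  exact (by fun_prop : Continuous fun u : ℝ ↦ exp (μ * u)).mul
    (h_base.cpow continuous_const (cosh_add_mem_slitPlane hv))

lemma integrable_coshKernel (hμ : |μ.re| < β) (hv : -1 < v.re) :
    Integrable (coshKernel β μ v) := by
  refine ((integrable_exp_neg_mul_abs (sub_pos.2 hμ)).const_mul _).mono'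
    (continuous_coshKernel β μ hv).aestronglyMeasurable (.of_forall fun u ↦
      norm_coshKernel_le (δ := min 1 (v.re + 1)) ((abs_nonneg _).trans hμ.le) ?_ ?_ ?_ u)
  · exact lt_min one_pos (by linarith)
  · exact min_le_left _ _
  · linarith [min_le_right 1 (v.re + 1)]

lemma coshKernel_eq_mul_coshKernel_add_one (β : ℝ) (μ : ℂ) (hv : -1 < v.re) (u : ℝ) :
    coshKernel β μ v u = (Real.cosh u + v) * coshKernel (β + 1) μ v u := by
  have h_ne := slitPlane_ne_zero (cosh_add_mem_slitPlane hv u)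
  have h_exp : (-β : ℂ) = 1 + -((β + 1 : ℝ) : ℂ) := by push_cast; ring
  rw [coshKernel, coshKernel, h_exp, cpow_add _ _ h_ne, cpow_one]
  ring

lemma hasDerivAt_coshKernel_param (β : ℝ) (μ : ℂ) (hv : -1 < v.re) (u : ℝ) :
    HasDerivAt (fun v ↦ coshKernel β μ v u) (-β * coshKernel (β + 1) μ v u) v := by
  have h_pow := ((hasDerivAt_id v).const_add (Real.cosh u : ℂ)).cpow_const (c := (-β : ℂ))
    (cosh_add_mem_slitPlane hv u)
  refine (h_pow.const_mul (exp (μ * u))).congr_deriv ?_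
  rw [coshKernel, show -((β + 1 : ℝ) : ℂ) = -β - 1 by push_cast; ring]
  simp only [id_eq]
  ring

lemma hasDerivAt_coshKernel (β : ℝ) (μ : ℂ) (hv : -1 < v.re) (u : ℝ) :
    HasDerivAt (coshKernel β μ v)
      (μ * coshKernel β μ v u - β * (Real.sinh u * coshKernel (β + 1) μ v u)) u := by
  have h_exp : HasDerivAt (fun u : ℝ ↦ exp (μ * u)) (exp (μ * u) * (μ * 1)) u :=
    (ofRealCLM.hasDerivAt.const_mul μ).cexp
  have h_base : HasDerivAt (fun u : ℝ ↦ (Real.cosh u + v : ℂ)) (Real.sinh u) u :=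
    (Real.hasDerivAt_cosh u).ofReal_comp.add_const v
  have h_cpow : HasDerivAt (fun X : ℂ ↦ X ^ (-β : ℂ)) (-β * (Real.cosh u + v) ^ (-β - 1 : ℂ))
      (Real.cosh u + v) :=
    ((hasDerivAt_id _).cpow_const (cosh_add_mem_slitPlane hv u)).congr_deriv (mul_one _)
  refine (h_exp.mul (HasDerivAt.comp u h_cpow h_base)).congr_deriv ?_
  rw [coshKernel, coshKernel, show -((β + 1 : ℝ) : ℂ) = -β - 1 by push_cast; ring]
  simp only [Function.comp_apply]
  ring

lemma hasDerivAt_coshIntegral (hμ : |μ.re| < β) (hv : -1 < v.re) :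
    HasDerivAt (coshIntegral β μ) (-β * coshIntegral (β + 1) μ v) v := by
  have hβ : 0 ≤ β := (abs_nonneg _).trans hμ.le
  obtain ⟨δ, hδ₀, hδ⟩ := exists_between (lt_min one_pos (neg_lt_iff_pos_add'.1 hv))
  obtain ⟨hδ₁, hδv⟩ := lt_min_iff.1 hδ
  have h_nhds : {w : ℂ | δ - 1 < w.re} ∈ nhds v :=
    (isOpen_lt continuous_const continuous_re).mem_nhds (by change δ - 1 < v.re; linarith)
  have h_re {w : ℂ} (hw : w ∈ {w : ℂ | δ - 1 < w.re}) : -1 < w.re := by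
    linarith [Set.mem_ofPred.1 hw]
  have h_deriv := hasDerivAt_integral_of_dominated_loc_of_deriv_le (μ := volume)
    (F := fun w u ↦ coshKernel β μ w u) (F' := fun w u ↦ -β * coshKernel (β + 1) μ w u)
    (bound := fun u ↦ β * ((δ / 2) ^ (-(β + 1)) * Real.exp (-((β + 1 - |μ.re|) * |u|))))
    h_nhds
    (by
      filter_upwards [h_nhds] with w hw
      exact (continuous_coshKernel β μ (h_re hw)).aestronglyMeasurable)
    (integrable_coshKernel hμ hv)
    ((continuous_coshKernel (β + 1) μ hv).aestronglyMeasurable.const_mul _)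
    (.of_forall fun u w hw ↦ by
      rw [norm_mul, norm_neg, norm_real, Real.norm_of_nonneg hβ]
      gcongr
      exact norm_coshKernel_le (by linarith) hδ₀ hδ₁.le (Set.mem_ofPred.1 hw).le u)
    (((integrable_exp_neg_mul_abs (by linarith)).const_mul _).const_mul _)
    (.of_forall fun u w hw ↦ hasDerivAt_coshKernel_param β μ (h_re hw) u)
  exact h_deriv.2.congr_deriv (integral_const_mul _ _)

lemma sinh_mul_coshKernel (β : ℝ) (μ v : ℂ) (u : ℝ) :
    Real.sinh u * coshKernel β μ v u =
      2⁻¹ * (coshKernel β (μ + 1) v u - coshKernel β (μ - 1) v u) := by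
  rw [coshKernel, coshKernel, coshKernel, add_mul, sub_mul, exp_add, exp_sub, one_mul, ofReal_sinh,
    sinh, exp_neg]
  ring

lemma integrable_sinh_mul_coshKernel_add_one (hμ : |μ.re| < β) (hv : -1 < v.re) :
    Integrable fun u ↦ Real.sinh u * coshKernel (β + 1) μ v u := by
  obtain ⟨hμ₀, hμ₁⟩ := abs_lt.1 hμ
  simp only [sinh_mul_coshKernel]
  refine ((integrable_coshKernel ?_ hv).sub (integrable_coshKernel ?_ hv)).const_mul _ <;>
  · simp only [add_re, sub_re, one_re, abs_lt]
    constructor <;> linarith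

lemma hasDerivAt_neg_mul_coshKernel_sub (β : ℝ) (μ : ℂ) (hv : -1 < v.re) (u : ℝ) :
    HasDerivAt
      (fun u ↦ -μ * coshKernel β μ v u - β * (Real.sinh u * coshKernel (β + 1) μ v u))
      ((β ^ 2 - μ ^ 2) * coshKernel β μ v u - β * (2 * β + 1) * v * coshKernel (β + 1) μ v u
        - β * (β + 1) * (1 - v ^ 2) * coshKernel (β + 1 + 1) μ v u) u := by
  have h_sinh : HasDerivAt (fun u : ℝ ↦ (Real.sinh u : ℂ)) (Real.cosh u) u :=
    (Real.hasDerivAt_sinh u).ofReal_comp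
  refine (((hasDerivAt_coshKernel β μ hv u).const_mul (-μ)).sub
    ((h_sinh.mul (hasDerivAt_coshKernel (β + 1) μ hv u)).const_mul (β : ℂ))).congr_deriv ?_
  have h_cosh_sq : (Real.cosh u : ℂ) ^ 2 = Real.sinh u ^ 2 + 1 := mod_cast Real.cosh_sq u
  rw [coshKernel_eq_mul_coshKernel_add_one β μ hv u,
    coshKernel_eq_mul_coshKernel_add_one (β + 1) μ hv u]
  have h_cast : ((β + 1 : ℝ) : ℂ) = β + 1 := by push_cast; rfl
  rw [h_cast]
  linear_combination (-β * (β + 1) * coshKernel (β + 1 + 1) μ v u) * h_cosh_sq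

lemma coshIntegral_recurrence (hμ : |μ.re| < β) (hv : -1 < v.re) :
    (β ^ 2 - μ ^ 2) * coshIntegral β μ v - β * (2 * β + 1) * v * coshIntegral (β + 1) μ v
      - β * (β + 1) * (1 - v ^ 2) * coshIntegral (β + 1 + 1) μ v = 0 := by
  have h₀ := (integrable_coshKernel hμ hv).const_mul (β ^ 2 - μ ^ 2)
  have h₁ := (integrable_coshKernel (by linarith : |μ.re| < β + 1) hv).const_mul
    (β * (2 * β + 1) * v)
  have h₂ := (integrable_coshKernel (by linarith : |μ.re| < β + 1 + 1) hv).const_mul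
    (β * (β + 1) * (1 - v ^ 2))
  have h₀₁ : Integrable fun u ↦ (β ^ 2 - μ ^ 2) * coshKernel β μ v u
      - β * (2 * β + 1) * v * coshKernel (β + 1) μ v u := h₀.sub h₁
  have h_primitive := ((integrable_coshKernel hμ hv).const_mul (-μ)).sub
    ((integrable_sinh_mul_coshKernel_add_one hμ hv).const_mul (β : ℂ))
  have h_zero := integral_eq_zero_of_hasDerivAt_of_integrable
    (hasDerivAt_neg_mul_coshKernel_sub β μ hv) (h₀₁.sub h₂) h_primitive
  rwa [integral_sub h₀₁ h₂, integral_sub h₀ h₁, integral_const_mul, integral_const_mul,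
    integral_const_mul] at h_zero

lemma norm_le_norm_cosh_add (hv : 0 ≤ v.re) (u : ℝ) : ‖v‖ ≤ ‖(Real.cosh u + v : ℂ)‖ := by
  rw [← sq_le_sq₀ (norm_nonneg _) (norm_nonneg _), Complex.sq_norm, Complex.sq_norm, normSq_apply,
    normSq_apply]
  simp only [add_re, ofReal_re, add_im, ofReal_im]
  nlinarith [Real.cosh_pos u, mul_nonneg (Real.cosh_pos u).le hv]

lemma norm_rpow_mul_norm_coshKernel_le {γ : ℝ} (hγ : 0 ≤ γ) (hv : 0 ≤ v.re) (u : ℝ) :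
    ‖v‖ ^ γ * ‖coshKernel (β + γ) μ v u‖ ≤ ‖coshKernel β μ v u‖ := by
  have h_pos : 0 < ‖(Real.cosh u + v : ℂ)‖ :=
    norm_pos_iff.2 (slitPlane_ne_zero (cosh_add_mem_slitPlane (by linarith) u))
  have h_ratio : ‖v‖ ^ γ * ‖(Real.cosh u + v : ℂ)‖ ^ (-γ) ≤ 1 := by
    rw [Real.rpow_neg h_pos.le, ← div_eq_mul_inv]
    exact div_le_one_of_le₀ (Real.rpow_le_rpow (norm_nonneg _) (norm_le_norm_cosh_add hv u) hγ)
      (by positivity)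
  rw [norm_coshKernel, norm_coshKernel, neg_add, Real.rpow_add h_pos]
  calc ‖v‖ ^ γ * (Real.exp (μ.re * u)
        * (‖(Real.cosh u + v : ℂ)‖ ^ (-β) * ‖(Real.cosh u + v : ℂ)‖ ^ (-γ)))
      = Real.exp (μ.re * u) * ‖(Real.cosh u + v : ℂ)‖ ^ (-β)
        * (‖v‖ ^ γ * ‖(Real.cosh u + v : ℂ)‖ ^ (-γ)) := by ring
    _ ≤ Real.exp (μ.re * u) * ‖(Real.cosh u + v : ℂ)‖ ^ (-β) :=
      mul_le_of_le_one_right (by positivity) h_ratio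

lemma exists_norm_rpow_mul_norm_coshIntegral_le (hμ : |μ.re| < β) :
    ∃ M, ∀ γ : ℝ, 0 ≤ γ → ∀ v : ℂ, 0 ≤ v.re → ‖v‖ ^ γ * ‖coshIntegral (β + γ) μ v‖ ≤ M := by
  refine ⟨∫ u : ℝ, (1 / 2) ^ (-β) * Real.exp (-((β - |μ.re|) * |u|)), fun γ hγ v hv ↦ ?_⟩
  calc ‖v‖ ^ γ * ‖coshIntegral (β + γ) μ v‖
      ≤ ‖v‖ ^ γ * ∫ u : ℝ, ‖coshKernel (β + γ) μ v u‖ := by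
        gcongr
        exact norm_integral_le_integral_norm _
    _ = ∫ u : ℝ, ‖v‖ ^ γ * ‖coshKernel (β + γ) μ v u‖ := (integral_const_mul _ _).symm
    _ ≤ ∫ u : ℝ, (1 / 2) ^ (-β) * Real.exp (-((β - |μ.re|) * |u|)) :=
        integral_mono_of_nonneg (.of_forall fun u ↦ by positivity)
          ((integrable_exp_neg_mul_abs (sub_pos.2 hμ)).const_mul _) (.of_forall fun u ↦
            (norm_rpow_mul_norm_coshKernel_le hγ hv u).trans
              (norm_coshKernel_le ((abs_nonneg _).trans hμ.le) one_pos le_rfl (by simpa) u))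

lemma coshIntegral_neg (β : ℝ) (μ v : ℂ) : coshIntegral β (-μ) v = coshIntegral β μ v := by
  rw [coshIntegral, ← integral_neg_eq_self]
  simp [coshIntegral, coshKernel]

lemma conj_coshIntegral (β : ℝ) (μ : ℂ) (hv : -1 < v.re) :
    conj (coshIntegral β μ v) = coshIntegral β (conj μ) (conj v) := by
  rw [coshIntegral, coshIntegral, ← integral_conj]
  refine integral_congr_ae (.of_forall fun u ↦ ?_)
  have h_pow := cpow_conj (Real.cosh u + v) (-β)
    (mem_slitPlane_iff_arg.1 (cosh_add_mem_slitPlane hv u)).1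
  simp only [map_add, map_neg, conj_ofReal] at h_pow
  simp only [coshKernel, map_mul, ← exp_conj, conj_ofReal, h_pow, conj_conj]

lemma ofReal_cpow_eq_exp_log_mul {x : ℝ} (hx : 0 < x) (a : ℂ) :
    (x : ℂ) ^ a = exp (Real.log x * a) := by
  rw [cpow_def_of_ne_zero (ofReal_ne_zero.2 hx.ne'), ofReal_log hx.le]

lemma betaIntegral_eq_integral_sigmoid (a b : ℂ) :
    betaIntegral a b = ∫ u : ℝ, (Real.sigmoid u : ℂ) ^ a * (Real.sigmoid (-u) : ℂ) ^ b := by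
  rw [betaIntegral, intervalIntegral.integral_of_le zero_le_one, integral_Ioc_eq_integral_Ioo,
    ← Real.range_sigmoid, ← Set.image_univ,
    integral_image_eq_integral_abs_deriv_smul .univ
      (fun u _ ↦ (Real.hasDerivAt_sigmoid u).hasDerivWithinAt) Real.sigmoid_injective.injOn,
    setIntegral_univ]
  refine integral_congr_ae (.of_forall fun u ↦ ?_)
  have h_pos := Real.sigmoid_pos u
  have h_pos' := Real.sigmoid_pos (-u)
  have h_ne : (Real.sigmoid u : ℂ) ≠ 0 := ofReal_ne_zero.2 h_pos.ne'
  have h_ne' : (Real.sigmoid (-u) : ℂ) ≠ 0 := ofReal_ne_zero.2 h_pos'.ne'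
  have h_one_sub : (1 - Real.sigmoid u : ℂ) = Real.sigmoid (-u) := by
    rw [Real.sigmoid_neg, ofReal_sub, ofReal_one]
  simp only [← Real.sigmoid_neg, abs_of_pos (mul_pos h_pos h_pos'), real_smul, ofReal_mul,
    h_one_sub, cpow_sub _ _ h_ne, cpow_sub _ _ h_ne', cpow_one]
  field_simp

lemma log_sigmoid_two_mul (u : ℝ) :
    Real.log (Real.sigmoid (2 * u)) = u - Real.log (2 * Real.cosh u) := by
  have h_sigmoid : Real.sigmoid (2 * u) = Real.exp u / (2 * Real.cosh u) := by
    rw [Real.sigmoid_def, Real.cosh_eq, inv_eq_one_div,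
      div_eq_div_iff (by positivity) (by positivity), mul_add, ← Real.exp_add]
    ring_nf
  rw [h_sigmoid, Real.log_div (Real.exp_ne_zero u) (by positivity), Real.log_exp]

lemma sigmoid_cpow_mul_sigmoid_neg_cpow (β : ℝ) (μ : ℂ) (u : ℝ) :
    (Real.sigmoid (2 * u) : ℂ) ^ ((β + μ) / 2) * (Real.sigmoid (-(2 * u)) : ℂ) ^ ((β - μ) / 2) =
      2 ^ (-β : ℂ) * coshKernel β μ 0 u := by
  have h_cosh := Real.cosh_pos u
  rw [coshKernel, add_zero, mul_left_comm, ← ofReal_ofNat,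
    ← mul_cpow_ofReal_nonneg two_pos.le h_cosh.le, ← ofReal_mul,
    ofReal_cpow_eq_exp_log_mul (Real.sigmoid_pos _),
    ofReal_cpow_eq_exp_log_mul (Real.sigmoid_pos _), ofReal_cpow_eq_exp_log_mul (by positivity),
    ← mul_neg, log_sigmoid_two_mul, log_sigmoid_two_mul, Real.cosh_neg, ← exp_add, ← exp_add]
  congr 1
  push_cast
  ring

lemma betaIntegral_eq_coshIntegral_zero (β : ℝ) (μ : ℂ) :
    betaIntegral ((β + μ) / 2) ((β - μ) / 2) = 2 ^ (1 - β : ℂ) * coshIntegral β μ 0 := by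
  have h_scale := Measure.integral_comp_mul_left (fun u : ℝ ↦
    (Real.sigmoid u : ℂ) ^ ((β + μ) / 2) * (Real.sigmoid (-u) : ℂ) ^ ((β - μ) / 2)) 2
  simp only [sigmoid_cpow_mul_sigmoid_neg_cpow, integral_const_mul] at h_scale
  rw [betaIntegral_eq_integral_sigmoid, sub_eq_add_neg 1, cpow_add _ _ two_ne_zero, cpow_one,
    mul_assoc, coshIntegral, h_scale, abs_of_pos (by norm_num), real_smul]
  push_cast
  ring

lemma re_half_add_pos (hμ : |μ.re| < β) : 0 < ((β + μ) / 2).re := by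
  rw [div_ofNat_re, add_re, ofReal_re]
  linarith [neg_lt_of_abs_lt hμ]

lemma re_half_sub_pos (hμ : |μ.re| < β) : 0 < ((β - μ) / 2).re := by
  rw [div_ofNat_re, sub_re, ofReal_re]
  linarith [lt_of_abs_lt hμ]

lemma Gamma_half_add_mul_Gamma_half_sub (hμ : |μ.re| < β) :
    Gamma ((β + μ) / 2) * Gamma ((β - μ) / 2) =
      2 ^ (1 - β : ℂ) * (Gamma β * coshIntegral β μ 0) := by
  rw [Gamma_mul_Gamma_eq_betaIntegral (re_half_add_pos hμ) (re_half_sub_pos hμ),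
    betaIntegral_eq_coshIntegral_zero, show (β + μ) / 2 + (β - μ) / 2 = β by ring]
  ring

lemma coshIntegral_zero_ne_zero (hμ : |μ.re| < β) : coshIntegral β μ 0 ≠ 0 := by
  have h_ne := mul_ne_zero (Gamma_ne_zero_of_re_pos (re_half_add_pos hμ))
    (Gamma_ne_zero_of_re_pos (re_half_sub_pos hμ))
  rw [Gamma_half_add_mul_Gamma_half_sub hμ] at h_ne
  exact right_ne_zero_of_mul (right_ne_zero_of_mul h_ne)

lemma Gamma_mul_Gamma_one_sub_mul_sin {s : ℂ} (hs₀ : 0 < s.re) (hs₁ : s.re < 1) :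
    Gamma s * Gamma (1 - s) * sin (Real.pi * s) = Real.pi := by
  have h_ne : Gamma s * Gamma (1 - s) ≠ 0 := mul_ne_zero (Gamma_ne_zero_of_re_pos hs₀)
    (Gamma_ne_zero_of_re_pos (by rwa [sub_re, one_re, sub_pos]))
  rw [Gamma_mul_Gamma_one_sub] at h_ne ⊢
  exact div_mul_cancel₀ _ (div_ne_zero_iff.1 h_ne).2

lemma cos_pi_mul_sub_cos_pi_mul (a μ : ℂ) :
    cos (Real.pi * μ) - cos (Real.pi * a) =
      2 * sin (Real.pi * ((a + μ) / 2)) * sin (Real.pi * ((a - μ) / 2)) := by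
  rw [cos_sub_cos, show (Real.pi * μ - Real.pi * a : ℂ) / 2 = -(Real.pi * ((a - μ) / 2)) by ring,
    sin_neg, show (Real.pi * μ + Real.pi * a : ℂ) / 2 = Real.pi * ((a + μ) / 2) by ring]
  ring

lemma coshIntegral_zero_mul_two_sub_mul_Gamma (hμ : |μ.re| < β) (hβ : β < 1) :
    coshIntegral β μ 0 * coshIntegral (2 - β) μ 0 * (1 - β) * (Gamma β * Gamma (1 - β)) =
      Gamma ((β + μ) / 2) * Gamma (1 - (β + μ) / 2) *
        (Gamma ((β - μ) / 2) * Gamma (1 - (β - μ) / 2)) := by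
  have h_prod := Gamma_half_add_mul_Gamma_half_sub hμ
  have h_prod' := Gamma_half_add_mul_Gamma_half_sub (by linarith : |μ.re| < 2 - β)
  have h_Gamma : Gamma ((2 - β : ℝ) : ℂ) = (1 - β) * Gamma (1 - β) := by
    rw [← Gamma_add_one _ (sub_ne_zero.2 (mod_cast hβ.ne')), ofReal_sub, ofReal_ofNat]
    ring_nf
  have h_two : (2 : ℂ) ^ (1 - β : ℂ) * 2 ^ (1 - (2 - β : ℝ) : ℂ) = 1 := by
    rw [← cpow_add _ _ two_ne_zero, ofReal_sub, ofReal_ofNat]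
    ring_nf
    exact cpow_zero 2
  have h_add : (((2 - β : ℝ) : ℂ) + μ) / 2 = 1 - (β - μ) / 2 := by push_cast; ring
  have h_sub : (((2 - β : ℝ) : ℂ) - μ) / 2 = 1 - (β + μ) / 2 := by push_cast; ring
  rw [h_Gamma, h_add, h_sub] at h_prod'
  linear_combination
    -(coshIntegral β μ 0 * coshIntegral (2 - β) μ 0 * (1 - β) * (Gamma β * Gamma (1 - β))) * h_two
    - 2 ^ (1 - (2 - β : ℝ) : ℂ) * ((1 - β) * Gamma (1 - β) * coshIntegral (2 - β) μ 0) * h_prod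
    - Gamma ((β + μ) / 2) * Gamma ((β - μ) / 2) * h_prod'

lemma coshIntegral_zero_mul_coshIntegral_two_sub_zero (hμ : |μ.re| < β) (hβ : β < 1) :
    coshIntegral β μ 0 * coshIntegral (2 - β) μ 0 * (1 - β)
      * (cos (Real.pi * μ) - cos (Real.pi * β)) = 2 * Real.pi * sin (Real.pi * β) := by
  have hμ' := abs_lt.1 hμ
  have h_half_add := Gamma_mul_Gamma_one_sub_mul_sin (re_half_add_pos hμ)
    (by rw [div_ofNat_re, add_re, ofReal_re]; linarith)
  have h_half_sub := Gamma_mul_Gamma_one_sub_mul_sin (re_half_sub_pos hμ)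
    (by rw [div_ofNat_re, sub_re, ofReal_re]; linarith)
  have h_beta := Gamma_mul_Gamma_one_sub_mul_sin (s := β)
    (ofReal_re β ▸ (abs_nonneg _).trans_lt hμ) (ofReal_re β ▸ hβ)
  have h_ne : Gamma β * Gamma (1 - β) ≠ 0 := fun h_zero ↦ by
    rw [h_zero, zero_mul] at h_beta
    exact Real.pi_ne_zero (mod_cast h_beta.symm)
  refine mul_left_cancel₀ h_ne ?_
  rw [cos_pi_mul_sub_cos_pi_mul]
  linear_combination
    2 * sin (Real.pi * ((β + μ) / 2)) * sin (Real.pi * ((β - μ) / 2))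
      * coshIntegral_zero_mul_two_sub_mul_Gamma hμ hβ
    + 2 * (Gamma ((β - μ) / 2) * Gamma (1 - (β - μ) / 2) * sin (Real.pi * ((β - μ) / 2)))
      * h_half_add
    + 2 * Real.pi * h_half_sub - 2 * Real.pi * h_beta

lemma coshKernel_one (β : ℝ) (μ : ℂ) (u : ℝ) :
    coshKernel β μ 1 u = 2 ^ (-β : ℂ) * coshKernel (2 * β) (2 * μ) 0 (u / 2) := by
  have h_cosh := Real.cosh_pos (u / 2)
  have h_add_one : (Real.cosh u + 1 : ℂ) = (2 : ℝ) * (Real.cosh (u / 2) ^ 2 : ℝ) := by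
    have h_double := Real.cosh_two_mul (u / 2)
    rw [mul_div_cancel₀ u two_ne_zero, Real.sinh_sq] at h_double
    rw [h_double]
    push_cast
    ring
  have h_sq : ((Real.cosh (u / 2) ^ 2 : ℝ) : ℂ) ^ (-β : ℂ) =
      (Real.cosh (u / 2) : ℂ) ^ (-(2 * β : ℝ) : ℂ) := by
    rw [ofReal_cpow_eq_exp_log_mul (by positivity), ofReal_cpow_eq_exp_log_mul h_cosh, Real.log_pow]
    push_cast
    ring_nf
  rw [coshKernel, coshKernel, h_add_one, mul_cpow_ofReal_nonneg two_pos.le (by positivity), h_sq,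
    add_zero, ofReal_ofNat]
  push_cast
  ring_nf

lemma coshIntegral_one_ne_zero (hμ : |μ.re| < β) : coshIntegral β μ 1 ≠ 0 := by
  have h_eq : coshIntegral β μ 1 = 2 ^ (-β : ℂ) * (2 * coshIntegral (2 * β) (2 * μ) 0) := by
    simp only [coshIntegral, coshKernel_one, integral_const_mul]
    rw [Measure.integral_comp_div, abs_two, real_smul, ofReal_ofNat]
  have h_re : |(2 * μ).re| < 2 * β := by
    rw [mul_re, re_ofNat, im_ofNat, zero_mul, sub_zero, abs_mul, Nat.abs_ofNat]
    linarith
  rw [h_eq]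
  exact mul_ne_zero (cpow_ne_zero_iff.2 (.inl two_ne_zero))
    (mul_ne_zero two_ne_zero (coshIntegral_zero_ne_zero h_re))

end CoshIntegral

section Gegenbauer

variable {β μ v : ℂ} {F F' G G' : ℂ → ℂ}

lemma eq_zero_of_second_order_linear_ode {a b y y' : ℝ → ℂ} {C t₀ : ℝ}
    (ha : ∀ x, ‖a x‖ ≤ C) (hb : ∀ x, ‖b x‖ ≤ C) (hy : ∀ x, HasDerivAt y (y' x) x)
    (hy' : ∀ x, HasDerivAt y' (a x * y' x + b x * y x) x) (h₀ : y t₀ = 0) (h₀' : y' t₀ = 0) :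
    y = 0 := by
  have hC : 0 ≤ C := (norm_nonneg _).trans (ha t₀)
  have h_lipschitz (x : ℝ) :
      LipschitzWith (1 + 2 * C).toNNReal fun p : ℂ × ℂ ↦ (p.2, a x * p.2 + b x * p.1) := by
    refine LipschitzWith.of_dist_le_mul fun p q ↦ ?_
    have h₁ : ‖p.1 - q.1‖ ≤ ‖p - q‖ := norm_fst_le (p - q)
    have h₂ : ‖p.2 - q.2‖ ≤ ‖p - q‖ := norm_snd_le (p - q)
    rw [Real.coe_toNNReal _ (by linarith), Prod.dist_eq, dist_eq_norm, dist_eq_norm, dist_eq_norm]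
    refine max_le (h₂.trans (le_mul_of_one_le_left (norm_nonneg _) (by linarith))) ?_
    calc ‖a x * p.2 + b x * p.1 - (a x * q.2 + b x * q.1)‖
        = ‖a x * (p.2 - q.2) + b x * (p.1 - q.1)‖ := by ring_nf
      _ ≤ ‖a x‖ * ‖p.2 - q.2‖ + ‖b x‖ * ‖p.1 - q.1‖ := by
          simpa only [norm_mul] using norm_add_le (a x * (p.2 - q.2)) (b x * (p.1 - q.1))
      _ ≤ C * ‖p - q‖ + C * ‖p - q‖ := by gcongr <;> simp only [ha, hb]
      _ ≤ (1 + 2 * C) * ‖p - q‖ := by linarith [norm_nonneg (p - q)]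
  have h_unique := ODE_solution_unique_univ
    (v := fun x (p : ℂ × ℂ) ↦ (p.2, a x * p.2 + b x * p.1)) (s := fun _ ↦ Set.univ)
    (f := fun x ↦ (y x, y' x)) (g := 0) (t₀ := t₀)
    (fun x ↦ (h_lipschitz x).lipschitzOnWith)
    (fun x ↦ ⟨(hy x).prodMk (hy' x), trivial⟩)
    (fun x ↦ ⟨(hasDerivAt_const x 0).congr_deriv (by simp [Prod.ext_iff]), trivial⟩)
    (by simp [h₀, h₀'])
  exact funext fun x ↦ congrArg Prod.fst (congrFun h_unique x)

/-- `F`, with derivative `F'`, solves the Gegenbauer equation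
`(1 - v²) F'' = (2 β + 1) v F' + (β² - μ²) F` in the strip `|re v| < 1`. -/
structure SolvesGegenbauer (β μ : ℂ) (F F' : ℂ → ℂ) : Prop where
  hasDerivAt : ∀ v : ℂ, |v.re| < 1 → HasDerivAt F (F' v) v
  hasDerivAt_deriv : ∀ v : ℂ, |v.re| < 1 →
    HasDerivAt F' (((2 * β + 1) * v * F' v + (β ^ 2 - μ ^ 2) * F v) / (1 - v ^ 2)) v

lemma one_sub_sq_mem_slitPlane (hv : |v.re| < 1) : 1 - v ^ 2 ∈ slitPlane := by
  left
  have h_sq : v.re ^ 2 < 1 := (sq_lt_one_iff_abs_lt_one _).2 hv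
  simp only [sq, sub_re, one_re, mul_re]
  nlinarith [sq_nonneg v.im]

lemma hasDerivAt_one_sub_sq (v : ℂ) : HasDerivAt (fun v : ℂ ↦ 1 - v ^ 2) (-(2 * v)) v := by
  simpa using ((hasDerivAt_id v).pow 2).const_sub 1

lemma solvesGegenbauer_coshIntegral {β : ℝ} (hμ : |μ.re| < β) :
    SolvesGegenbauer β μ (coshIntegral β μ) (fun v ↦ -β * coshIntegral (β + 1) μ v) where
  hasDerivAt v hv := hasDerivAt_coshIntegral hμ (abs_lt.1 hv).1
  hasDerivAt_deriv v hv := by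
    have h_deriv := hasDerivAt_coshIntegral (by linarith : |μ.re| < β + 1) (abs_lt.1 hv).1
    refine (h_deriv.const_mul (-β : ℂ)).congr_deriv ?_
    rw [eq_div_iff (slitPlane_ne_zero (one_sub_sq_mem_slitPlane hv)), ofReal_add, ofReal_one]
    linear_combination -coshIntegral_recurrence hμ (abs_lt.1 hv).1

namespace SolvesGegenbauer

lemma comp_neg (hF : SolvesGegenbauer β μ F F') :
    SolvesGegenbauer β μ (fun v ↦ F (-v)) (fun v ↦ -F' (-v)) where
  hasDerivAt v hv := by
    refine ((hF.hasDerivAt (-v) (by simpa)).comp v (hasDerivAt_neg v)).congr_deriv ?_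
    ring
  hasDerivAt_deriv v hv := by
    refine ((hF.hasDerivAt_deriv (-v) (by simpa)).comp v (hasDerivAt_neg v)).neg.congr_deriv ?_
    ring

lemma sub (hF : SolvesGegenbauer β μ F F') (hG : SolvesGegenbauer β μ G G') :
    SolvesGegenbauer β μ (fun v ↦ F v - G v) (fun v ↦ F' v - G' v) where
  hasDerivAt v hv := (hF.hasDerivAt v hv).sub (hG.hasDerivAt v hv)
  hasDerivAt_deriv v hv :=
    ((hF.hasDerivAt_deriv v hv).sub (hG.hasDerivAt_deriv v hv)).congr_deriv (by ring)

lemma const_mul (hF : SolvesGegenbauer β μ F F') (c : ℂ) :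
    SolvesGegenbauer β μ (fun v ↦ c * F v) (fun v ↦ c * F' v) where
  hasDerivAt v hv := (hF.hasDerivAt v hv).const_mul c
  hasDerivAt_deriv v hv := ((hF.hasDerivAt_deriv v hv).const_mul c).congr_deriv (by ring)

lemma one_sub_sq_cpow_mul (hF : SolvesGegenbauer (1 - β) μ F F') :
    SolvesGegenbauer β μ (fun v ↦ (1 - v ^ 2) ^ (1 / 2 - β) * F v)
      (fun v ↦ (1 - v ^ 2) ^ (1 / 2 - β) * (F' v - (1 - 2 * β) * v * F v / (1 - v ^ 2))) := by
  have h_cpow (v : ℂ) (hv : |v.re| < 1) : HasDerivAt (fun v : ℂ ↦ (1 - v ^ 2) ^ (1 / 2 - β))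
      ((1 - v ^ 2) ^ (1 / 2 - β) * (-(1 - 2 * β) * v / (1 - v ^ 2))) v := by
    have h_slit := one_sub_sq_mem_slitPlane hv
    refine ((hasDerivAt_one_sub_sq v).cpow_const h_slit).congr_deriv ?_
    rw [cpow_sub _ _ (slitPlane_ne_zero h_slit), cpow_one]
    ring
  constructor <;> intro v hv <;> have h_ne := slitPlane_ne_zero (one_sub_sq_mem_slitPlane hv)
  · refine ((h_cpow v hv).mul (hF.hasDerivAt v hv)).congr_deriv ?_
    ring
  · have h_quot := (((hasDerivAt_id v).const_mul (1 - 2 * β)).mul (hF.hasDerivAt v hv)).div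
      (hasDerivAt_one_sub_sq v) h_ne
    refine ((h_cpow v hv).mul ((hF.hasDerivAt_deriv v hv).sub h_quot)).congr_deriv ?_
    simp only [Pi.sub_apply, Pi.div_apply, Pi.mul_apply, id_eq]
    field_simp
    ring

lemma eq_zero_of_mul_I (hF : SolvesGegenbauer β μ F F') (h₀ : F 0 = 0) (h₀' : F' 0 = 0) (x : ℝ) :
    F (x * I) = 0 := by
  have h_line (x : ℝ) : HasDerivAt (fun x : ℝ ↦ (x * I : ℂ)) I x := by
    simpa using ofRealCLM.hasDerivAt.mul_const I
  have h_re (x : ℝ) : |(x * I : ℂ).re| < 1 := by simp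
  have h_one_sub (x : ℝ) : 1 - (x * I : ℂ) ^ 2 = (1 + x ^ 2 : ℝ) := by
    push_cast
    linear_combination -x ^ 2 * I_sq
  have h_bound (x : ℝ) {c : ℝ} (hc : |c| ≤ 1 + x ^ 2) (z : ℂ) :
      ‖z * (c / (1 + x ^ 2) : ℝ)‖ ≤ ‖z‖ := by
    rw [norm_mul, norm_real, Real.norm_eq_abs, abs_div, abs_of_pos (by positivity : 0 < 1 + x ^ 2)]
    exact mul_le_of_le_one_right (norm_nonneg z) (div_le_one_of_le₀ hc (by positivity))
  refine congrFun (eq_zero_of_second_order_linear_ode (t₀ := 0)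
    (y := fun x : ℝ ↦ F (x * I)) (y' := fun x ↦ F' (x * I) * I)
    (a := fun x ↦ -(2 * β + 1) * (x / (1 + x ^ 2) : ℝ))
    (b := fun x ↦ -(β ^ 2 - μ ^ 2) * (1 / (1 + x ^ 2) : ℝ))
    (C := ‖-(2 * β + 1)‖ + ‖-(β ^ 2 - μ ^ 2)‖)
    (fun x ↦ (h_bound x ?_ _).trans (le_add_of_nonneg_right (norm_nonneg _)))
    (fun x ↦ (h_bound x ?_ _).trans (le_add_of_nonneg_left (norm_nonneg _)))
    (fun x ↦ (hF.hasDerivAt _ (h_re x)).comp x (h_line x))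
    (fun x ↦ (((hF.hasDerivAt_deriv _ (h_re x)).comp x (h_line x)).mul_const I).congr_deriv ?_)
    (by simpa) (by simp [h₀'])) x
  · exact abs_le.2 ⟨by nlinarith [sq_nonneg (x + 1)], by nlinarith [sq_nonneg (x - 1)]⟩
  · rw [abs_one]
    linarith [sq_nonneg x]
  · rw [h_one_sub]
    push_cast
    linear_combination ((2 * β + 1) * x * I * F' (x * I) + (β ^ 2 - μ ^ 2) * F (x * I))
      / (1 + x ^ 2) * I_sq

end SolvesGegenbauer

lemma one_sub_mul_coshIntegral_zero_mul_eq {β : ℝ} {t : ℂ} (hμ : |μ.re| < β) (hμ' : |μ.re| < 1 - β)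
    (hcos : t * cos (Real.pi * μ) = cos (Real.pi * β)) :
    (1 - t) * (coshIntegral β μ 0 * ((1 - β) * coshIntegral (2 - β) μ 0)) =
      (1 + t) * (coshIntegral (1 - β) μ 0 * (β * coshIntegral (β + 1) μ 0)) := by
  have hβ₀ : 0 < β := (abs_nonneg _).trans_lt hμ
  have hβ₁ : β < 1 := by linarith [abs_nonneg μ.re]
  have h_prod := coshIntegral_zero_mul_coshIntegral_two_sub_zero hμ hβ₁
  have h_prod' := coshIntegral_zero_mul_coshIntegral_two_sub_zero hμ' (by linarith)
  have h_cos_ne : cos (Real.pi * μ) ≠ 0 := fun h_zero ↦ by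
    have h_sin : 0 < Real.sin (Real.pi * β) := Real.sin_pos_of_pos_of_lt_pi
      (by positivity) (mul_lt_of_lt_one_right Real.pi_pos hβ₁)
    rw [h_zero, ← hcos, h_zero, mul_zero, sub_zero, mul_zero] at h_prod
    have h_ne : (2 * Real.pi * Real.sin (Real.pi * β) : ℝ) ≠ 0 := by positivity
    exact h_ne (mod_cast h_prod.symm)
  have h_pi : Real.pi * ((1 - β : ℝ) : ℂ) = Real.pi - Real.pi * β := by push_cast; ring
  rw [h_pi, cos_pi_sub, sin_pi_sub, ← hcos, ofReal_sub, ofReal_one,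
    show 2 - (1 - β) = β + 1 by ring] at h_prod'
  rw [← hcos] at h_prod
  refine mul_left_cancel₀ h_cos_ne ?_
  linear_combination h_prod - h_prod'

lemma exists_const_mul_coshIntegral_one_sub_eq {β : ℝ} {t : ℂ} (hμ : |μ.re| < β)
    (hμ' : |μ.re| < 1 - β) (hcos : t * cos (Real.pi * μ) = cos (Real.pi * β)) :
    ∃ c : ℂ, ∀ x : ℝ, c * ((1 - (x * I) ^ 2) ^ (1 / 2 - β : ℂ) * coshIntegral (1 - β) μ (x * I)) =
      coshIntegral β μ (x * I) - t * coshIntegral β μ (-(x * I)) := by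
  have h_ne := coshIntegral_zero_ne_zero hμ'
  have h_sol := solvesGegenbauer_coshIntegral hμ
  have h_dual := solvesGegenbauer_coshIntegral hμ'
  rw [ofReal_sub, ofReal_one] at h_dual
  set c := (1 - t) * coshIntegral β μ 0 / coshIntegral (1 - β) μ 0 with hc
  have h_diff := (h_dual.one_sub_sq_cpow_mul.const_mul c).sub
    (h_sol.sub (h_sol.comp_neg.const_mul t))
  refine ⟨c, fun x ↦ sub_eq_zero.1 (h_diff.eq_zero_of_mul_I ?_ ?_ x)⟩
  · simp only [neg_zero, zero_pow two_ne_zero, sub_zero, one_cpow, one_mul, hc,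
      div_mul_cancel₀ _ h_ne]
    ring
  · have h_match := one_sub_mul_coshIntegral_zero_mul_eq hμ hμ' hcos
    rw [show 2 - β = 1 - β + 1 by ring] at h_match
    simp only [neg_zero, zero_pow two_ne_zero, sub_zero, one_cpow, one_mul, mul_zero, zero_mul,
      zero_div, hc]
    field_simp
    linear_combination -h_match

end Gegenbauer

lemma exists_cos_pi_mul_eq {β c : ℝ} (hβ₀ : 0 < β) (hβ₁ : β ≤ 1) (hc : Real.cos (Real.pi * β) < c) :
    ∃ μ : ℂ, |μ.re| < β ∧ (conj μ = μ ∨ conj μ = -μ) ∧ cos (Real.pi * μ) = c := by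
  have h_nonneg : 0 ≤ Real.pi * β := by positivity
  have h_le : Real.pi * β ≤ Real.pi := mul_le_of_le_one_right Real.pi_pos.le hβ₁
  rcases le_or_gt c 1 with hc₁ | hc₁
  · refine ⟨(Real.arccos c / Real.pi : ℝ), ?_, .inl (conj_ofReal _), ?_⟩
    · rw [ofReal_re, abs_of_nonneg (div_nonneg (Real.arccos_nonneg c) Real.pi_pos.le),
        div_lt_iff₀' Real.pi_pos]
      simpa only [Real.arccos_cos h_nonneg h_le] using
        Real.arccos_lt_arccos (Real.neg_one_le_cos _) hc hc₁
    · rw [← ofReal_mul, mul_div_cancel₀ _ Real.pi_ne_zero, ← ofReal_cos,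
        Real.cos_arccos ((Real.neg_one_le_cos _).trans hc.le) hc₁]
  · refine ⟨(Real.arcosh c / Real.pi : ℝ) * I, by simpa, .inr (by simp), ?_⟩
    rw [← mul_assoc, ← ofReal_mul, mul_div_cancel₀ _ Real.pi_ne_zero, cos_mul_I, ← ofReal_cosh,
      Real.cosh_arcosh hc₁.le]

section AttachedDiscs

open Bornology

variable {V W : Type*} [NormedAddCommGroup V] [NormedSpace ℂ V] [NormedAddCommGroup W]
  [NormedSpace ℂ W] {E : Set V} {Φ : ℂ → V} {v : ℂ}

/-- `Φ` is a bounded analytic disc with boundary in `E`, parametrised by the closed right half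
plane; the boundary point at infinity is left out. -/
structure IsAttachedDisc (E : Set V) (Φ : ℂ → V) : Prop where
  diffContOnCl : DiffContOnCl ℂ Φ {v | 0 < v.re}
  isBounded_image : IsBounded (Φ '' {v | 0 ≤ v.re})
  mem : ∀ x : ℝ, Φ (x * I) ∈ E

lemma IsAttachedDisc.comp [ProperSpace V] (hΦ : IsAttachedDisc E Φ) {g : V → W} {E' : Set W}
    (hg : Differentiable ℂ g) (hmem : ∀ x : ℝ, g (Φ (x * I)) ∈ E') : IsAttachedDisc E' (g ∘ Φ) where
  diffContOnCl := hg.comp_diffContOnCl hΦ.diffContOnCl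
  isBounded_image := by
    rw [Set.image_comp]
    exact (hΦ.isBounded_image.isCompact_closure.image hg.continuous).isBounded.subset
      (Set.image_mono subset_closure)
  mem := hmem

lemma IsAttachedDisc.norm_le {C : ℝ} (hΦ : IsAttachedDisc E Φ) (hE : ∀ z ∈ E, ‖z‖ ≤ C)
    (hv : 0 ≤ v.re) : ‖Φ v‖ ≤ C := by
  obtain ⟨M, hM⟩ := hΦ.isBounded_image.exists_norm_le
  have h_bound (w : ℂ) (hw : 0 ≤ w.re) : ‖Φ w‖ ≤ M := hM _ (Set.mem_image_of_mem Φ hw)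
  refine PhragmenLindelof.right_half_plane_of_bounded_on_real hΦ.diffContOnCl
    ⟨1, one_lt_two, 0, .of_bound M ?_⟩ ?_ (fun x ↦ hE _ (hΦ.mem x)) hv
  · refine Filter.Eventually.filter_mono inf_le_right (Filter.eventually_principal.2 fun w hw ↦ ?_)
    simpa using h_bound w (le_of_lt hw)
  · refine ⟨M, Filter.eventually_map.2 ?_⟩
    filter_upwards [Filter.eventually_ge_atTop 0] with x hx
    exact h_bound x hx

lemma differentiable_eval_prod (p : MvPolynomial (Fin 2) ℂ) :
    Differentiable ℂ fun z : ℂ × ℂ ↦ MvPolynomial.eval (fun i ↦ if i = 0 then z.1 else z.2) p := by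
  have h_coord : Differentiable ℂ fun (z : ℂ × ℂ) (i : Fin 2) ↦ if i = 0 then z.1 else z.2 :=
    differentiable_pi.2 fun i ↦ by split_ifs <;> fun_prop
  exact (differentiableOn_univ.1 (AnalyticOnNhd.eval_mvPolynomial p).differentiableOn).comp h_coord

lemma IsAttachedDisc.mem_polyHull2 {K : Set (ℂ × ℂ)} {Φ : ℂ → ℂ × ℂ} (hK : IsBounded K)
    (hΦ : IsAttachedDisc K Φ) (hv : 0 ≤ v.re) : Φ v ∈ polyHull2 K := by
  intro p
  let f (z : ℂ × ℂ) : ℂ := MvPolynomial.eval (fun i ↦ if i = 0 then z.1 else z.2) p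
  have h_eval : Differentiable ℂ f := differentiable_eval_prod p
  have h_bdd := (hK.isCompact_closure.image h_eval.continuous.norm).bddAbove.mono
    (Set.image_mono subset_closure)
  have h_disc : IsAttachedDisc (f '' K) (f ∘ Φ) :=
    hΦ.comp h_eval fun x ↦ Set.mem_image_of_mem f (hΦ.mem x)
  exact h_disc.norm_le (Set.forall_mem_image.2 fun z hz ↦ le_csSup h_bdd ⟨z, hz, rfl⟩) hv

end AttachedDiscs

section FlattenedSurface

variable {β t : ℝ} {μ : ℂ} {n : ℕ}

lemma conj_coshIntegral_mul_I (hμ : conj μ = μ ∨ conj μ = -μ) (β x : ℝ) :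
    conj (coshIntegral β μ (x * I)) = coshIntegral β μ (-(x * I)) := by
  rw [conj_coshIntegral _ _ (by simp), map_mul, conj_ofReal, conj_I, mul_neg]
  rcases hμ with hμ | hμ <;> simp only [hμ, coshIntegral_neg]

lemma exists_norm_one_sub_sq_mul_coshIntegral_pow_le (hμ : |μ.re| < β) (hn : n ≠ 0) :
    ∃ M, ∀ v : ℂ, 0 ≤ v.re → ‖(1 - v ^ 2) * coshIntegral (β + 2 / n) μ v ^ n‖ ≤ M := by
  have h_pos : (0 : ℝ) < 2 / n := by positivity
  obtain ⟨M₁, hM₁⟩ := exists_norm_rpow_mul_norm_coshIntegral_le hμ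
  obtain ⟨M₂, hM₂⟩ := exists_norm_rpow_mul_norm_coshIntegral_le (by linarith : |μ.re| < β + 2 / n)
  refine ⟨M₂ ^ n + M₁ ^ n, fun v hv ↦ ?_⟩
  have h_small : ‖coshIntegral (β + 2 / n) μ v‖ ≤ M₂ := by simpa using hM₂ 0 le_rfl v hv
  have h_large : ‖v‖ ^ 2 * ‖coshIntegral (β + 2 / n) μ v‖ ^ n ≤ M₁ ^ n := by
    have h_rpow : (‖v‖ ^ (2 / n : ℝ)) ^ n = ‖v‖ ^ 2 := by
      rw [← Real.rpow_mul_natCast (norm_nonneg v), div_mul_cancel₀ _ (Nat.cast_ne_zero.2 hn),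
        Real.rpow_two]
    rw [← h_rpow, ← mul_pow]
    exact pow_le_pow_left₀ (by positivity) (hM₁ _ h_pos.le v hv) n
  calc ‖(1 - v ^ 2) * coshIntegral (β + 2 / n) μ v ^ n‖
      ≤ (1 + ‖v‖ ^ 2) * ‖coshIntegral (β + 2 / n) μ v‖ ^ n := by
        rw [norm_mul, norm_pow]
        gcongr
        exact (norm_sub_le 1 (v ^ 2)).trans_eq (by rw [norm_one, norm_pow])
    _ ≤ M₂ ^ n + M₁ ^ n := by
        rw [add_mul, one_mul]
        gcongr

/-- The disc attached to `w = (z + t z̄) ^ n`, for `β = 1 / 2 - 1 / n` and suitable `μ` and `c`. -/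
noncomputable def gegenbauerDisc (n : ℕ) (μ c v : ℂ) : ℂ × ℂ :=
  (I * coshIntegral (1 / 2 - 1 / n) μ v,
    (I * c) ^ n * ((1 - v ^ 2) * coshIntegral (1 / 2 - 1 / n + 2 / n) μ v ^ n))

lemma diffContOnCl_gegenbauerDisc (hμ : |μ.re| < 1 / 2 - 1 / n) (c : ℂ) :
    DiffContOnCl ℂ (gegenbauerDisc n μ c) {v | 0 < v.re} := by
  refine DifferentiableOn.diffContOnCl fun v hv ↦ ?_
  rw [closure_setOfPred_lt_re] at hv
  have hv' : -1 < v.re := neg_one_lt_zero.trans_le hv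
  have h_fst := (hasDerivAt_coshIntegral hμ hv').differentiableAt
  have h_snd := (hasDerivAt_coshIntegral
    (hμ.trans_le (le_add_of_nonneg_right (by positivity : (0 : ℝ) ≤ 2 / n))) hv').differentiableAt
  exact DifferentiableAt.differentiableWithinAt (by unfold gegenbauerDisc; fun_prop)

lemma isBounded_image_gegenbauerDisc (hn : n ≠ 0) (hμ : |μ.re| < 1 / 2 - 1 / n) (c : ℂ) :
    Bornology.IsBounded (gegenbauerDisc n μ c '' {v | 0 ≤ v.re}) := by
  obtain ⟨M₁, hM₁⟩ := exists_norm_rpow_mul_norm_coshIntegral_le hμ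
  obtain ⟨M₂, hM₂⟩ := exists_norm_one_sub_sq_mul_coshIntegral_pow_le hμ hn
  refine isBounded_iff_forall_norm_le.2 ⟨max M₁ (‖(I * c) ^ n‖ * M₂),
    Set.forall_mem_image.2 fun v hv ↦ max_le_max ?_ ?_⟩
  · simpa [gegenbauerDisc] using hM₁ 0 le_rfl v hv
  · rw [gegenbauerDisc, norm_mul]
    gcongr
    exact hM₂ v hv

lemma snd_gegenbauerDisc_mul_I {c : ℂ} {x : ℝ} (hn : n ≠ 0) (hβ : β = 1 / 2 - 1 / n)
    (hμ : conj μ = μ ∨ conj μ = -μ)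
    (hc : c * ((1 - (x * I) ^ 2) ^ (1 / 2 - β : ℂ) * coshIntegral (1 - β) μ (x * I)) =
      coshIntegral β μ (x * I) - t * coshIntegral β μ (-(x * I))) :
    (gegenbauerDisc n μ c (x * I)).2 =
      ((gegenbauerDisc n μ c (x * I)).1 + t * conj (gegenbauerDisc n μ c (x * I)).1) ^ n := by
  have h_root : ((1 - (x * I) ^ 2 : ℂ) ^ (1 / 2 - β : ℂ)) ^ n = 1 - (x * I) ^ 2 := by
    have h_exp : (1 / 2 - β : ℂ) = (n : ℂ)⁻¹ := by
      rw [hβ]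
      push_cast
      ring
    rw [h_exp, cpow_nat_inv_pow _ hn]
  have h_one_sub : β + 2 / n = 1 - β := by rw [hβ]; ring
  have h_linear : I * coshIntegral β μ (x * I) + t * conj (I * coshIntegral β μ (x * I)) =
      I * c * ((1 - (x * I) ^ 2) ^ (1 / 2 - β : ℂ) * coshIntegral (1 - β) μ (x * I)) := by
    rw [map_mul, conj_I, conj_coshIntegral_mul_I hμ]
    linear_combination -I * hc
  rw [gegenbauerDisc, ← hβ, h_one_sub, h_linear, mul_pow (I * c), mul_pow (_ ^ (_ : ℂ)), h_root]

lemma exists_isAttachedDisc_add_mul_conj_pow (hn : 3 ≤ n) (ht₀ : 0 < t) (ht₁ : t < 1) :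
    ∃ Φ, IsAttachedDisc {p : ℂ × ℂ | p.2 = (p.1 + t * conj p.1) ^ n} Φ ∧
      (Φ 1).1 ≠ 0 ∧ (Φ 1).2 = 0 := by
  have hn₀ : n ≠ 0 := by omega
  have h_inv : (1 / n : ℝ) ≤ 1 / 3 := one_div_le_one_div_of_le three_pos (mod_cast hn)
  have h_inv_pos : (0 : ℝ) < 1 / n := by positivity
  obtain ⟨β, hβ⟩ : ∃ β : ℝ, β = 1 / 2 - 1 / n := ⟨_, rfl⟩
  have h_cos_pos : 0 < Real.cos (Real.pi * β) := Real.cos_pos_of_mem_Ioo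
    ⟨by nlinarith [Real.pi_pos], by nlinarith [Real.pi_pos]⟩
  obtain ⟨μ, hμ, hμ_conj, hcos⟩ := exists_cos_pi_mul_eq (by linarith : 0 < β) (by linarith)
    ((lt_div_iff₀ ht₀).2 (mul_lt_of_lt_one_right h_cos_pos ht₁))
  have h_tcos : t * cos (Real.pi * μ) = cos (Real.pi * β) := by
    rw [hcos, ← ofReal_mul, mul_div_cancel₀ _ ht₀.ne', ofReal_cos, ofReal_mul]
  obtain ⟨c, hc⟩ := exists_const_mul_coshIntegral_one_sub_eq hμ (by linarith) h_tcos
  have h_disc : IsAttachedDisc {p : ℂ × ℂ | p.2 = (p.1 + t * conj p.1) ^ n}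
      (gegenbauerDisc n μ c) :=
    ⟨diffContOnCl_gegenbauerDisc (hβ ▸ hμ) c, isBounded_image_gegenbauerDisc hn₀ (hβ ▸ hμ) c,
      fun x ↦ snd_gegenbauerDisc_mul_I hn₀ hβ hμ_conj (hc x)⟩
  exact ⟨_, h_disc, mul_ne_zero I_ne_zero (coshIntegral_one_ne_zero (hβ ▸ hμ)),
    by simp [gegenbauerDisc]⟩

end FlattenedSurface

section Surface

open Bornology

variable {t r : ℝ} {p : ℂ × ℂ}

lemma mem_Sset_iff (ht : t ≠ 0) :
    p ∈ Sset t ↔ p.1 ^ 3 + 3 * t * p.2 = (p.1 + t * conj p.1) ^ 3 := by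
  have ht' : (t : ℂ) ≠ 0 := ofReal_ne_zero.2 ht
  constructor
  · rintro ⟨z, rfl⟩
    ring
  · refine fun h ↦ ⟨p.1, Prod.ext rfl (mul_left_cancel₀ (mul_ne_zero three_ne_zero ht') ?_)⟩
    linear_combination h

lemma scale_mem_Sset (hp : p ∈ Sset t) (δ : ℝ) : ((δ * p.1, δ ^ 3 * p.2) : ℂ × ℂ) ∈ Sset t := by
  obtain ⟨z, rfl⟩ := hp
  refine ⟨δ * z, Prod.ext rfl ?_⟩
  simp only [map_mul, conj_ofReal]
  ring

lemma fst_eq_zero_of_mem_Sset (ht₀ : t ≠ 0) (ht₁ : |t| ≠ 1) (hp : p ∈ Sset t)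
    (hp₀ : p.1 ^ 3 + 3 * t * p.2 = 0) : p.1 = 0 := by
  rw [(mem_Sset_iff ht₀).1 hp, pow_eq_zero_iff three_ne_zero, add_eq_zero_iff_eq_neg] at hp₀
  have h_norm : ‖p.1‖ = |t| * ‖p.1‖ := by
    conv_lhs => rw [hp₀, norm_neg, norm_mul, norm_conj, norm_real, Real.norm_eq_abs]
  by_contra h_ne
  exact ht₁ ((mul_eq_right₀ (norm_ne_zero_iff.2 h_ne)).1 h_norm.symm)

lemma isBounded_eClosedBall (r : ℝ) : IsBounded (eClosedBall r) := by
  refine isBounded_iff_forall_norm_le.2 ⟨|r|, fun z (hz : ‖z.1‖ ^ 2 + ‖z.2‖ ^ 2 ≤ r ^ 2) ↦ ?_⟩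
  exact max_le (abs_norm z.1 ▸ sq_le_sq.1 (by linarith [sq_nonneg ‖z.2‖]))
    (abs_norm z.2 ▸ sq_le_sq.1 (by linarith [sq_nonneg ‖z.1‖]))

lemma exists_pos_forall_scale_mem_eClosedBall {s : Set (ℂ × ℂ)} (hs : IsBounded s) (hr : 0 < r) :
    ∃ δ : ℝ, 0 < δ ∧ ∀ p ∈ s, ((δ * p.1, δ ^ 3 * p.2) : ℂ × ℂ) ∈ eClosedBall r := by
  obtain ⟨M, hM₀, hM⟩ := hs.exists_pos_norm_le
  obtain ⟨δ, hδ₀, hδ⟩ := exists_between (lt_min one_pos (by positivity : 0 < r / (2 * M)))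
  obtain ⟨hδ₁, hδr⟩ := lt_min_iff.1 hδ
  refine ⟨δ, hδ₀, fun p hp ↦ ?_⟩
  have hδM : δ * M ≤ r / 2 := by
    have h_mul := (lt_div_iff₀ (by positivity)).1 hδr
    linarith
  have h_fst : ‖(δ * p.1 : ℂ)‖ ≤ r / 2 := by
    rw [norm_mul, norm_real, Real.norm_of_nonneg hδ₀.le]
    exact (mul_le_mul_of_nonneg_left ((norm_fst_le p).trans (hM p hp)) hδ₀.le).trans hδM
  have h_snd : ‖(δ ^ 3 * p.2 : ℂ)‖ ≤ r / 2 := by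
    rw [norm_mul, norm_pow, norm_real, Real.norm_of_nonneg hδ₀.le]
    exact (mul_le_mul (pow_le_of_le_one hδ₀.le hδ₁.le three_ne_zero)
      ((norm_snd_le p).trans (hM p hp)) (norm_nonneg _) hδ₀.le).trans hδM
  change ‖(δ * p.1 : ℂ)‖ ^ 2 + ‖(δ ^ 3 * p.2 : ℂ)‖ ^ 2 ≤ r ^ 2
  nlinarith [norm_nonneg (δ * p.1 : ℂ), norm_nonneg (δ ^ 3 * p.2 : ℂ)]

lemma exists_isAttachedDisc_Sset (ht₀ : 0 < t) (ht₁ : t < 1) :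
    ∃ Φ, IsAttachedDisc (Sset t) Φ ∧ (Φ 1).1 ≠ 0 ∧ (Φ 1).1 ^ 3 + 3 * t * (Φ 1).2 = 0 := by
  have ht : (t : ℂ) ≠ 0 := ofReal_ne_zero.2 ht₀.ne'
  obtain ⟨Φ, hΦ, h_fst, h_snd⟩ := exists_isAttachedDisc_add_mul_conj_pow le_rfl ht₀ ht₁
  have h_shear : Differentiable ℂ fun p : ℂ × ℂ ↦ (p.1, (p.2 - p.1 ^ 3) / (3 * t)) := by fun_prop
  refine ⟨_, hΦ.comp h_shear fun x ↦ (mem_Sset_iff ht₀.ne').2 ?_, h_fst, ?_⟩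
  · rw [← Set.mem_ofPred.1 (hΦ.mem x)]
    field_simp
    ring
  · simp only [Function.comp_apply, h_snd]
    field_simp
    ring

lemma not_polyConvex2_Sset_inter_eClosedBall (ht₀ : 0 < t) (ht₁ : t < 1) (hr : 0 < r) :
    ¬ PolyConvex2 (Sset t ∩ eClosedBall r) := by
  intro h_convex
  obtain ⟨Φ, hΦ, h_ne, h_zero⟩ := exists_isAttachedDisc_Sset ht₀ ht₁
  obtain ⟨δ, hδ, h_ball⟩ := exists_pos_forall_scale_mem_eClosedBall hΦ.isBounded_image hr
  have h_scale : Differentiable ℂ fun p : ℂ × ℂ ↦ ((δ * p.1, δ ^ 3 * p.2) : ℂ × ℂ) := by fun_prop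
  have h_disc := hΦ.comp (E' := Sset t ∩ eClosedBall r) h_scale fun x ↦
    ⟨scale_mem_Sset (hΦ.mem x) δ, h_ball _ (Set.mem_image_of_mem Φ (by simp))⟩
  have h_mem := h_disc.mem_polyHull2 ((isBounded_eClosedBall r).subset Set.inter_subset_right)
    (v := 1) (by simp)
  rw [h_convex] at h_mem
  have h_fst : (δ * (Φ 1).1 : ℂ) = 0 :=
    fst_eq_zero_of_mem_Sset ht₀.ne' (by rw [abs_of_pos ht₀]; exact ht₁.ne) h_mem.1
      (by simp only [Function.comp_apply]; linear_combination δ ^ 3 * h_zero)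
  exact h_ne ((mul_eq_zero.1 h_fst).resolve_left (ofReal_ne_zero.2 hδ.ne'))

end Surface

/-- for `0 < t < 1` and every `r > 0`, `S_t ∩ B̄(0;r)` is not polynomially
convex; in particular `S_t` is not locally polynomially convex at the origin. -/
theorem stmt_7 (t : ℝ) (ht0 : 0 < t) (ht1 : t < 1) :
    (∀ r > (0 : ℝ), ¬ PolyConvex2 (Sset t ∩ eClosedBall r)) ∧
      ¬ (∃ r > (0 : ℝ), PolyConvex2 (Sset t ∩ eClosedBall r)) := by
  have h_not (r : ℝ) (hr : r > 0) : ¬ PolyConvex2 (Sset t ∩ eClosedBall r) :=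
    not_polyConvex2_Sset_inter_eClosedBall ht0 ht1 hr
  exact ⟨h_not, fun ⟨r, hr, h_convex⟩ ↦ h_not r hr h_convex⟩
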